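/- Let Ω be a domain in ℂⁿ (n ≥ 2), 0 < r ≤ 1, and let p ∈ ∂Ω be a (P,r)-extreme point, witnessed by the holomorphic embedding f. Then for every 0 < r' < r and every c > 0 there exist ε₀ > 0 and γ₀ > 0 such that σ_Ω(q) > γ₀ for all q ∈ Γ(r',c) ∩ B(p;ε₀). -/

import Mathlib

open Complex Metric Set

noncomputable section

/-- `ℂⁿ` with `n = N + 1`, carrying the Euclidean norm; points are written `z = (z', z_n)`
with `z' ∈ ℂᴺ` the first `N` coordinates and `z_n` the last coordinate. -/
abbrev CSp (N : ℕ) : Type := EuclideanSpace ℂ (Fin (N + 1))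

variable {N : ℕ}

/-- The last coordinate `z_n` of `z = (z', z_n)`. -/
def lastC (z : CSp N) : ℂ := z (Fin.last N)

/-- The first `N` coordinates `z'` of `z = (z', z_n)`. -/
def initC (z : CSp N) : Fin N → ℂ := fun j => z j.castSucc

/-- The point `(z', z_n) ∈ ℂⁿ`. -/
def mkPt (z' : Fin N → ℂ) (zn : ℂ) : CSp N := WithLp.toLp 2 (Fin.snoc z' zn)

/-- The weight `wt(K) = Σ_j k_j / (2 m_j)` of a multi-index `K` with respect to
`Λ = (1/m₁, …, 1/m_N)`. -/
def wt (m : Fin N → ℕ) (K : Fin N → ℕ) : ℝ := ∑ j, (K j : ℝ) / (2 * m j)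

/-- `P` is a real-valued weighted homogeneous polynomial of the form
`P(z') = Σ_{wt(K)=wt(L)=1/2} a_{KL} z'^K conj(z')^L` with `a_{KL} = conj (a_{LK})`. -/
def IsWHP (m : Fin N → ℕ) (P : (Fin N → ℂ) → ℝ) : Prop :=
  ∃ a : (Fin N → ℕ) → (Fin N → ℕ) → ℂ,
    {q : (Fin N → ℕ) × (Fin N → ℕ) | a q.1 q.2 ≠ 0}.Finite ∧
    (∀ K L, a K L = starRingEnd ℂ (a L K)) ∧
    (∀ K L, a K L ≠ 0 → wt m K = 1 / 2 ∧ wt m L = 1 / 2) ∧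
    (∀ z' : Fin N → ℂ, (P z' : ℂ) =
      ∑ᶠ K, ∑ᶠ L, a K L * (∏ j, z' j ^ K j) * ∏ j, starRingEnd ℂ (z' j) ^ L j)

/-- The model `E_P = {(z',z_n) : P(z') < 2 Re z_n}`. -/
def EP (P : (Fin N → ℂ) → ℝ) : Set (CSp N) :=
  {z | P (initC z) < 2 * (lastC z).re}

/-- `D(r) = {(z',z_n) : |z_n - r|² + P(z') < r²}`. -/
def Dball (P : (Fin N → ℂ) → ℝ) (r : ℝ) : Set (CSp N) :=
  {z | ‖lastC z - (r : ℂ)‖ ^ 2 + P (initC z) < r ^ 2}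

/-- The squeezing function `σ_Ω(p)`: the supremum of all `r > 0` such that some holomorphic
embedding `f : Ω → 𝔹ⁿ` with `f p = 0` satisfies `B(0;r) ⊆ f(Ω)`. -/
def sqf {n : ℕ} (Ω : Set (EuclideanSpace ℂ (Fin n))) (p : EuclideanSpace ℂ (Fin n)) : ℝ :=
  sSup {r : ℝ | 0 < r ∧ ∃ f : EuclideanSpace ℂ (Fin n) → EuclideanSpace ℂ (Fin n),
    DifferentiableOn ℂ f Ω ∧ InjOn f Ω ∧ f '' Ω ⊆ ball 0 1 ∧ f p = 0 ∧ ball 0 r ⊆ f '' Ω}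

/-!
The weighted dilations `δ_t (z', z_n) = (…, t ^ (1 / (2 m_j)) z_j, …, t z_n)` preserve `E_P`, and
`δ_t⁻¹ (D r) = {t |z_n|² + P(z') < 2 r Re z_n}`, which still makes sense at `t = 0`. Given
`q ∈ Γ(r', c)`, put `t = Re (f q)_n`. Then `w = δ_t⁻¹ (f q)` satisfies `Re w_n = 1`, `|Im w_n| ≤ c`
and `t |w_n|² + P(w') < 2 r'`, so the pair `(t, w)` stays in a compact set on which, since `r' < r`,
`w` still lies in the open set `δ_t⁻¹ (D r)`. The projective map
`(z', z_n) ↦ (z' / (1 + z_n), 1 / (1 + z_n))` is injective and bounded on `E_P`, because `P` grows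
at least linearly. By compactness the image of `δ_t⁻¹ (D r)` under it contains a ball of uniform
radius about the image of `w`. Hence its composition with `δ_t⁻¹ ∘ f`, translated and scaled, bounds
the squeezing function at `q` from below, on all of `Γ(r', c)` and uniformly in `Ω` and `f`.
-/

section Dilate

variable {ι : Type*}

/-- The anisotropic dilation `z_j ↦ t ^ α_j z_j` with exponents `α`. -/
def dilate (α : ι → ℝ) (t : ℝ) (z : ι → ℂ) : ι → ℂ :=
  fun j => ((t ^ α j : ℝ) : ℂ) * z j

variable {α : ι → ℝ} {s t : ℝ}

theorem dilate_one (z : ι → ℂ) : dilate α 1 z = z := by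
  funext j
  simp [dilate]

theorem dilate_dilate (hs : 0 ≤ s) (ht : 0 ≤ t) (z : ι → ℂ) :
    dilate α s (dilate α t z) = dilate α (s * t) z := by
  funext j
  simp only [dilate, Real.mul_rpow hs ht, ofReal_mul, mul_assoc]

theorem dilate_zero_left (hα : ∀ j, 0 < α j) (z : ι → ℂ) : dilate α 0 z = 0 := by
  funext j
  simp [dilate, Real.zero_rpow (hα j).ne']

theorem dilate_zero_right (α : ι → ℝ) (t : ℝ) : dilate α t 0 = 0 := by
  funext j
  simp [dilate]

theorem continuous_dilate_left (hα : ∀ j, 0 < α j) (z : ι → ℂ) :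
    Continuous fun t => dilate α t z :=
  continuous_pi fun j =>
    (continuous_ofReal.comp (Real.continuous_rpow_const (hα j).le)).mul continuous_const

theorem differentiable_dilate [Finite ι] (α : ι → ℝ) (t : ℝ) : Differentiable ℂ (dilate α t) := by
  have := Fintype.ofFinite ι
  unfold dilate
  fun_prop

theorem prod_dilate_pow [Fintype ι] (ht : 0 < t) (K : ι → ℕ) (z : ι → ℂ) :
    ∏ j, dilate α t z j ^ K j = ((t ^ ∑ j, α j * K j : ℝ) : ℂ) * ∏ j, z j ^ K j := by
  simp only [dilate, mul_pow, Finset.prod_mul_distrib, Real.rpow_sum_of_pos ht,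
    Real.rpow_mul_natCast ht.le, ofReal_prod, ofReal_pow]

theorem prod_conj_dilate_pow [Fintype ι] (ht : 0 < t) (K : ι → ℕ) (z : ι → ℂ) :
    ∏ j, starRingEnd ℂ (dilate α t z j) ^ K j =
      ((t ^ ∑ j, α j * K j : ℝ) : ℂ) * ∏ j, starRingEnd ℂ (z j) ^ K j := by
  simpa only [map_prod, map_pow, map_mul, conj_ofReal]
    using congrArg (starRingEnd ℂ) (prod_dilate_pow ht K z)

theorem mul_norm_le_norm_dilate [Fintype ι] (hα : ∀ j, α j ≤ 1) (ht₀ : 0 < t) (ht₁ : t ≤ 1)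
    (z : ι → ℂ) : t * ‖z‖ ≤ ‖dilate α t z‖ := by
  rw [← le_div_iff₀' ht₀, pi_norm_le_iff_of_nonneg (by positivity)]
  intro j
  rw [le_div_iff₀' ht₀]
  calc t * ‖z j‖ ≤ t ^ α j * ‖z j‖ := by
        gcongr
        exact Real.self_le_rpow_of_le_one ht₀.le ht₁ (hα j)
    _ = ‖dilate α t z j‖ := by
        rw [dilate, norm_mul, norm_real, Real.norm_of_nonneg (Real.rpow_nonneg ht₀.le _)]
    _ ≤ ‖dilate α t z‖ := norm_le_pi_norm _ j

theorem exists_norm_dilate_eq_one [Fintype ι] (hα : ∀ j, 0 < α j) {z : ι → ℂ} (hz : 1 ≤ ‖z‖) :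
    ∃ t, 0 < t ∧ t ≤ 1 ∧ ‖dilate α t z‖ = 1 := by
  have h₀ : ‖dilate α 0 z‖ = 0 := by rw [dilate_zero_left hα, norm_zero]
  obtain ⟨t, ⟨ht₀, ht₁⟩, ht⟩ := intermediate_value_Icc zero_le_one
    (continuous_dilate_left hα z).norm.continuousOn
    (show (1 : ℝ) ∈ Icc ‖dilate α 0 z‖ ‖dilate α 1 z‖ by
      rw [h₀, dilate_one]; exact ⟨zero_le_one, hz⟩)
  refine ⟨t, ht₀.lt_of_ne ?_, ht₁, ht⟩
  rintro rfl
  exact zero_ne_one (h₀.symm.trans ht)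

end Dilate

section Gauge

variable {ι : Type*}

/-- A continuous function on `ℂ^ι`, positive off the origin and homogeneous of degree one under the
dilations `dilate α t`. Positive weighted homogeneous polynomials are the motivating example. -/
structure IsDilationGauge (α : ι → ℝ) (P : (ι → ℂ) → ℝ) : Prop where
  continuous : Continuous P
  pos : ∀ z, z ≠ 0 → 0 < P z
  map_dilate : ∀ t, 0 < t → ∀ z, P (dilate α t z) = t * P z

namespace IsDilationGauge

variable {α : ι → ℝ} {P : (ι → ℂ) → ℝ}

theorem map_zero (hP : IsDilationGauge α P) : P 0 = 0 := by
  have h := hP.map_dilate 2 two_pos 0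
  rw [dilate_zero_right] at h
  linarith

theorem nonneg (hP : IsDilationGauge α P) (z : ι → ℂ) : 0 ≤ P z := by
  rcases eq_or_ne z 0 with rfl | hz
  · exact hP.map_zero.ge
  · exact (hP.pos z hz).le

theorem exists_pos_le_of_norm_eq_one [Fintype ι] (hP : IsDilationGauge α P) :
    ∃ ν > 0, ∀ z, ‖z‖ = 1 → ν ≤ P z := by
  have hpos : ∀ z ∈ sphere (0 : ι → ℂ) 1, 0 < P z := fun z hz =>
    hP.pos z (ne_zero_of_mem_unit_sphere ⟨z, hz⟩)
  obtain ⟨ν, hν, h⟩ := (isCompact_sphere (0 : ι → ℂ) 1).exists_forall_le' hP.continuous.continuousOn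
    hpos
  exact ⟨ν, hν, fun z hz => h z (mem_sphere_zero_iff_norm.2 hz)⟩

theorem exists_norm_le_one_add [Fintype ι] (hP : IsDilationGauge α P)
    (hα : ∀ j, α j ∈ Ioc 0 1) : ∃ μ > 0, ∀ z, ‖z‖ ≤ 1 + μ * P z := by
  obtain ⟨ν, hν, hmin⟩ := hP.exists_pos_le_of_norm_eq_one
  refine ⟨ν⁻¹, inv_pos.2 hν, fun z => ?_⟩
  rcases le_total ‖z‖ 1 with hz | hz
  · exact hz.trans (le_add_of_nonneg_right (mul_nonneg (inv_pos.2 hν).le (hP.nonneg z)))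
  obtain ⟨t, ht₀, ht₁, ht⟩ := exists_norm_dilate_eq_one (fun j => (hα j).1) hz
  have hνP : t * ‖z‖ * ν ≤ t * P z := calc
    t * ‖z‖ * ν ≤ 1 * ν := by
      gcongr
      exact ht ▸ mul_norm_le_norm_dilate (fun j => (hα j).2) ht₀ ht₁ z
    _ ≤ P (dilate α t z) := by simpa only [one_mul] using hmin _ ht
    _ = t * P z := hP.map_dilate t ht₀ z
  have : ‖z‖ ≤ ν⁻¹ * P z := by
    rw [inv_mul_eq_div, le_div_iff₀ hν]
    exact le_of_mul_le_mul_left (by linarith) ht₀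
  linarith

end IsDilationGauge

end Gauge

namespace IsWHP

variable {m : Fin N → ℕ} {P : (Fin N → ℂ) → ℝ}

theorem exists_eq_finset_sum (hP : IsWHP m P) :
    ∃ (S : Finset ((Fin N → ℕ) × (Fin N → ℕ))) (a : (Fin N → ℕ) × (Fin N → ℕ) → ℂ),
      (∀ q ∈ S, wt m q.1 = 1 / 2 ∧ wt m q.2 = 1 / 2) ∧
      ∀ z, (P z : ℂ) =
        ∑ q ∈ S, a q * (∏ j, z j ^ q.1 j) * ∏ j, starRingEnd ℂ (z j) ^ q.2 j := by
  obtain ⟨a, hfin, -, hwt, hsum⟩ := hP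
  refine ⟨hfin.toFinset, fun q => a q.1 q.2, fun q hq => hwt _ _ (hfin.mem_toFinset.1 hq),
    fun z => ?_⟩
  set term : (Fin N → ℕ) × (Fin N → ℕ) → ℂ := fun q =>
    a q.1 q.2 * (∏ j, z j ^ q.1 j) * ∏ j, starRingEnd ℂ (z j) ^ q.2 j with hterm
  have hsupp : Function.support term ⊆ {q | a q.1 q.2 ≠ 0} := fun q hq h₀ =>
    hq (by simp only [hterm, h₀, zero_mul])
  calc (P z : ℂ) = ∑ᶠ q, term q := by rw [hsum, finsum_curry term (hfin.subset hsupp)]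
    _ = ∑ q ∈ hfin.toFinset, term q :=
      finsum_eq_sum_of_support_subset _ (by rwa [hfin.coe_toFinset])

theorem continuous (hP : IsWHP m P) : Continuous P := by
  obtain ⟨S, a, -, hsum⟩ := hP.exists_eq_finset_sum
  have : Continuous fun z => (P z : ℂ) := by
    simp only [hsum]
    fun_prop
  exact continuous_re.comp this

theorem map_dilate (hP : IsWHP m P) {t : ℝ} (ht : 0 < t) (z : Fin N → ℂ) :
    P (dilate (fun j => 1 / (2 * (m j : ℝ))) t z) = t * P z := by
  obtain ⟨S, a, hwt, hsum⟩ := hP.exists_eq_finset_sum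
  have hexp (K : Fin N → ℕ) : ∑ j, 1 / (2 * (m j : ℝ)) * K j = wt m K :=
    Finset.sum_congr rfl fun j _ => by ring
  have hsqrt : ((t ^ (1 / 2 : ℝ) : ℝ) : ℂ) * ((t ^ (1 / 2 : ℝ) : ℝ) : ℂ) = t := by
    rw [← ofReal_mul, ← Real.rpow_add ht, add_halves, Real.rpow_one]
  apply ofReal_injective
  rw [ofReal_mul, hsum, hsum, Finset.mul_sum]
  refine Finset.sum_congr rfl fun q hq => ?_
  rw [prod_dilate_pow ht, prod_conj_dilate_pow ht, hexp, hexp, (hwt q hq).1, (hwt q hq).2, ← hsqrt]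
  ring

theorem isDilationGauge (hP : IsWHP m P) (hpos : ∀ z, z ≠ 0 → 0 < P z) :
    IsDilationGauge (fun j => 1 / (2 * (m j : ℝ))) P :=
  ⟨hP.continuous, hpos, fun _ ht z => hP.map_dilate ht z⟩

end IsWHP

theorem one_div_two_mul_mem_Ioc {m : Fin N → ℕ} (hm : ∀ j, 0 < m j) (j : Fin N) :
    1 / (2 * (m j : ℝ)) ∈ Ioc (0 : ℝ) 1 := by
  have : (1 : ℝ) ≤ m j := mod_cast hm j
  exact ⟨by positivity, div_le_one_of_le₀ (by linarith) (by positivity)⟩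

section Coordinates

theorem lastC_mkPt (z' : Fin N → ℂ) (w : ℂ) : lastC (mkPt z' w) = w := by
  simp [lastC, mkPt]

theorem initC_mkPt (z' : Fin N → ℂ) (w : ℂ) : initC (mkPt z' w) = z' := by
  funext j
  simp [initC, mkPt]

theorem mkPt_initC_lastC (z : CSp N) : mkPt (initC z) (lastC z) = z := by
  ext i
  refine Fin.lastCases ?_ (fun j => ?_) i <;> simp [mkPt, initC, lastC]

@[fun_prop]
theorem differentiable_lastC : Differentiable ℂ (lastC : CSp N → ℂ) := by
  unfold lastC
  fun_prop

@[fun_prop]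
theorem differentiable_initC : Differentiable ℂ (initC : CSp N → Fin N → ℂ) := by
  unfold initC
  fun_prop

@[fun_prop]
theorem continuous_lastC : Continuous (lastC : CSp N → ℂ) :=
  differentiable_lastC.continuous

@[fun_prop]
theorem continuous_initC : Continuous (initC : CSp N → Fin N → ℂ) :=
  differentiable_initC.continuous

theorem differentiable_mkPt :
    Differentiable ℂ fun x : (Fin N → ℂ) × ℂ => (mkPt x.1 x.2 : CSp N) := by
  rw [differentiable_euclidean]
  intro i
  refine Fin.lastCases ?_ (fun j => ?_) i <;> simp only [mkPt, Fin.snoc_last, Fin.snoc_castSucc] <;>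
    fun_prop

theorem isBounded_of_forall_norm_le {s : Set (CSp N)} {A B : ℝ}
    (hinit : ∀ z ∈ s, ‖initC z‖ ≤ A) (hlast : ∀ z ∈ s, ‖lastC z‖ ≤ B) :
    Bornology.IsBounded s := by
  have hK : IsCompact (closedBall (0 : Fin N → ℂ) A ×ˢ closedBall (0 : ℂ) B) :=
    (isCompact_closedBall 0 A).prod (isCompact_closedBall 0 B)
  refine (hK.image differentiable_mkPt.continuous).isBounded.subset fun z hz => ?_
  exact ⟨(initC z, lastC z), ⟨mem_closedBall_zero_iff.2 (hinit z hz),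
    mem_closedBall_zero_iff.2 (hlast z hz)⟩, mkPt_initC_lastC z⟩

end Coordinates

section ProjMap

/-- The projective map `(z', z_n) ↦ (z' / (1 + z_n), 1 / (1 + z_n))`, which is bounded on `E_P`. -/
def projMap (z : CSp N) : CSp N :=
  mkPt ((1 + lastC z)⁻¹ • initC z) (1 + lastC z)⁻¹

/-- The inverse `(w', w_n) ↦ (w' / w_n, 1 / w_n - 1)` of `projMap`. -/
def projMapInv (w : CSp N) : CSp N :=
  mkPt ((lastC w)⁻¹ • initC w) ((lastC w)⁻¹ - 1)

theorem lastC_projMap_ne_zero {z : CSp N} (hz : 1 + lastC z ≠ 0) : lastC (projMap z) ≠ 0 := by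
  rw [projMap, lastC_mkPt]
  exact inv_ne_zero hz

theorem projMap_projMapInv {w : CSp N} (hw : lastC w ≠ 0) : projMap (projMapInv w) = w := by
  simp only [projMap, projMapInv, lastC_mkPt, initC_mkPt, add_sub_cancel, inv_inv,
    smul_inv_smul₀ hw, mkPt_initC_lastC]

theorem projMapInv_projMap {z : CSp N} (hz : 1 + lastC z ≠ 0) : projMapInv (projMap z) = z := by
  simp only [projMap, projMapInv, lastC_mkPt, initC_mkPt, inv_inv, smul_inv_smul₀ hz,
    add_sub_cancel_left, mkPt_initC_lastC]

theorem injOn_projMap : InjOn (projMap : CSp N → CSp N) {z | 1 + lastC z ≠ 0} :=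
  LeftInvOn.injOn fun _ hz => projMapInv_projMap hz

theorem differentiableOn_projMap :
    DifferentiableOn ℂ (projMap : CSp N → CSp N) {z | 1 + lastC z ≠ 0} := by
  have hinv : DifferentiableOn ℂ (fun z : CSp N => (1 + lastC z)⁻¹) {z | 1 + lastC z ≠ 0} :=
    DifferentiableOn.inv (by fun_prop) fun _ hz => hz
  exact differentiable_mkPt.comp_differentiableOn
    ((hinv.smul differentiable_initC.differentiableOn).prodMk hinv)

theorem differentiableOn_projMapInv :
    DifferentiableOn ℂ (projMapInv : CSp N → CSp N) {w | lastC w ≠ 0} := by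
  have hinv : DifferentiableOn ℂ (fun w : CSp N => (lastC w)⁻¹) {w | lastC w ≠ 0} :=
    DifferentiableOn.inv (by fun_prop) fun _ hw => hw
  exact differentiable_mkPt.comp_differentiableOn
    ((hinv.smul differentiable_initC.differentiableOn).prodMk (hinv.sub_const 1))

end ProjMap

theorem one_add_ne_zero_of_re_nonneg {z : ℂ} (hz : 0 ≤ z.re) : 1 + z ≠ 0 := fun h => by
  have := congrArg re h
  simp only [add_re, one_re, zero_re] at this
  linarith

section Models

variable {α : Fin N → ℝ} {P : (Fin N → ℂ) → ℝ} {r r' s t : ℝ}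

/-- The weighted dilation `(z', z_n) ↦ (dilate α t z', t z_n)` of `ℂⁿ`, under which `E_P` is
invariant. -/
def dilateC (α : Fin N → ℝ) (t : ℝ) (z : CSp N) : CSp N :=
  mkPt (dilate α t (initC z)) (t * lastC z)

theorem dilateC_dilateC (hs : 0 ≤ s) (ht : 0 ≤ t) (hst : s * t = 1) (z : CSp N) :
    dilateC α s (dilateC α t z) = z := by
  simp only [dilateC, initC_mkPt, lastC_mkPt, dilate_dilate hs ht, ← mul_assoc, ← ofReal_mul, hst,
    dilate_one, ofReal_one, one_mul, mkPt_initC_lastC]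

theorem differentiable_dilateC (α : Fin N → ℝ) (t : ℝ) : Differentiable ℂ (dilateC α t) :=
  differentiable_mkPt.comp (((differentiable_dilate α t).comp differentiable_initC).prodMk
    (differentiable_lastC.const_mul _))

theorem dilateC_mem_EP_iff (hP : IsDilationGauge α P) (ht : 0 < t) {z : CSp N} :
    dilateC α t z ∈ EP P ↔ z ∈ EP P := by
  simp only [EP, mem_ofPred_eq, dilateC, initC_mkPt, lastC_mkPt, hP.map_dilate t ht, re_ofReal_mul,
    mul_left_comm 2 t, mul_lt_mul_iff_right₀ ht]

theorem re_lastC_pos_of_mem_EP (hP : IsDilationGauge α P) {z : CSp N} (hz : z ∈ EP P) :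
    0 < (lastC z).re := by
  have hz : P (initC z) < 2 * (lastC z).re := hz
  linarith [hP.nonneg (initC z)]

theorem one_add_lastC_ne_zero_of_mem_EP (hP : IsDilationGauge α P) {z : CSp N} (hz : z ∈ EP P) :
    1 + lastC z ≠ 0 :=
  one_add_ne_zero_of_re_nonneg (re_lastC_pos_of_mem_EP hP hz).le

theorem isBounded_projMap_image_EP (hP : IsDilationGauge α P)
    (hα : ∀ j, α j ∈ Ioc 0 1) : Bornology.IsBounded (projMap '' EP P) := by
  obtain ⟨μ, hμ, hgrowth⟩ := hP.exists_norm_le_one_add hα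
  have hden (z : CSp N) : 1 + (lastC z).re ≤ ‖1 + lastC z‖ := by
    simpa using re_le_norm (1 + lastC z)
  refine isBounded_of_forall_norm_le (A := 1 + 2 * μ) (B := 1) ?_ ?_
  · rintro _ ⟨z, hz, rfl⟩
    have hre := re_lastC_pos_of_mem_EP hP hz
    have hPz : P (initC z) < 2 * (lastC z).re := hz
    rw [projMap, initC_mkPt, norm_smul, norm_inv, inv_mul_le_iff₀ (by linarith [hden z])]
    calc ‖initC z‖ ≤ 1 + μ * P (initC z) := hgrowth _
      _ ≤ 1 + μ * (2 * (lastC z).re) := by gcongr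
      _ ≤ (1 + (lastC z).re) * (1 + 2 * μ) := by linarith
      _ ≤ ‖1 + lastC z‖ * (1 + 2 * μ) := by gcongr; exact hden z
  · rintro _ ⟨z, hz, rfl⟩
    rw [projMap, lastC_mkPt, norm_inv]
    exact inv_le_one_of_one_le₀ (by linarith [hden z, re_lastC_pos_of_mem_EP hP hz])

/-- The preimage of `D(r)` under the dilation by `t > 0`, extended to `t = 0` by its limit; this
makes the parameter set `0 ≤ t` closed. -/
def scaledDball (P : (Fin N → ℂ) → ℝ) (r t : ℝ) : Set (CSp N) :=
  {w | t * ‖lastC w‖ ^ 2 + P (initC w) < 2 * r * (lastC w).re}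

theorem mem_Dball_iff {z : CSp N} :
    z ∈ Dball P r ↔ ‖lastC z‖ ^ 2 + P (initC z) < 2 * r * (lastC z).re := by
  have : ‖lastC z - (r : ℂ)‖ ^ 2 = ‖lastC z‖ ^ 2 - 2 * r * (lastC z).re + r ^ 2 := by
    simp only [← normSq_eq_norm_sq, normSq_sub, normSq_ofReal, conj_ofReal, re_mul_ofReal]
    ring
  rw [Dball, mem_ofPred_eq, this]
  constructor <;> intro h <;> linarith

theorem Dball_subset_Dball (hP : IsDilationGauge α P) (hr'₀ : 0 < r') (hr : r' ≤ r) :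
    Dball P r' ⊆ Dball P r := by
  intro z hz
  rw [mem_Dball_iff] at hz ⊢
  have hre : 0 < (lastC z).re := by
    have : 0 < 2 * r' * (lastC z).re :=
      (add_nonneg (sq_nonneg _) (hP.nonneg _)).trans_lt hz
    exact (mul_pos_iff_of_pos_left (by positivity)).1 this
  exact hz.trans_le (by gcongr)

theorem dilateC_mem_Dball_iff (hP : IsDilationGauge α P) (ht : 0 < t) {w : CSp N} :
    dilateC α t w ∈ Dball P r ↔ w ∈ scaledDball P r t := by
  have hl : ‖(t : ℂ) * lastC w‖ ^ 2 + t * P (initC w) =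
      t * (t * ‖lastC w‖ ^ 2 + P (initC w)) := by
    rw [norm_mul, norm_real, mul_pow, Real.norm_eq_abs, sq_abs]
    ring
  rw [mem_Dball_iff, dilateC, initC_mkPt, lastC_mkPt, hP.map_dilate t ht, re_ofReal_mul, hl,
    mul_left_comm (2 * r) t, mul_lt_mul_iff_right₀ ht]
  rfl

end Models

section NormalizedCone

variable {α : Fin N → ℝ} {P : (Fin N → ℂ) → ℝ} {r r' c t : ℝ}

/-- A compact set containing the pairs `(t, w)` obtained from the points `z` of `D(r)` with
`|Im z_n| ≤ c |Re z_n|` and `Re z_n > 0` by putting `t = Re z_n` and dilating `z` by `t⁻¹` to `w`.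
The limiting values `t = 0`, approached as `z → 0`, are included. -/
def normalizedCone (P : (Fin N → ℂ) → ℝ) (r c : ℝ) : Set (ℝ × CSp N) :=
  {x | 0 ≤ x.1 ∧ (lastC x.2).re = 1 ∧ |(lastC x.2).im| ≤ c ∧
    x.1 * ‖lastC x.2‖ ^ 2 + P (initC x.2) ≤ 2 * r}

theorem isClosed_normalizedCone (hP : Continuous P) : IsClosed (normalizedCone P r c) := by
  have hre : Continuous fun x : ℝ × CSp N => (lastC x.2).re :=
    continuous_re.comp (by fun_prop)
  have him : Continuous fun x : ℝ × CSp N => (lastC x.2).im :=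
    continuous_im.comp (by fun_prop)
  exact (isClosed_le continuous_const continuous_fst).inter <|
    (isClosed_eq hre continuous_const).inter <|
    (isClosed_le him.abs continuous_const).inter <|
    isClosed_le ((continuous_fst.mul (by fun_prop)).add (hP.comp (by fun_prop))) continuous_const

theorem isBounded_normalizedCone (hP : IsDilationGauge α P)
    (hα : ∀ j, α j ∈ Ioc 0 1) : Bornology.IsBounded (normalizedCone P r c) := by
  obtain ⟨μ, hμ, hgrowth⟩ := hP.exists_norm_le_one_add hα
  have hfst : Prod.fst '' normalizedCone P r c ⊆ Icc 0 (2 * r) := by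
    rintro _ ⟨⟨t, w⟩, ⟨ht, hre, -, hle⟩, rfl⟩
    have : 1 ≤ ‖lastC w‖ := hre ▸ re_le_norm (lastC w)
    refine ⟨ht, ?_⟩
    calc t ≤ t * ‖lastC w‖ ^ 2 := le_mul_of_one_le_right ht (one_le_pow₀ this)
      _ ≤ t * ‖lastC w‖ ^ 2 + P (initC w) := le_add_of_nonneg_right (hP.nonneg _)
      _ ≤ 2 * r := hle
  have hsnd : Bornology.IsBounded (Prod.snd '' normalizedCone P r c) := by
    refine isBounded_of_forall_norm_le (A := 1 + μ * (2 * r)) (B := 1 + c) ?_ ?_ <;>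
      rintro _ ⟨⟨t, w⟩, ⟨ht, hre, him, hle⟩, rfl⟩
    · have hPw : P (initC w) ≤ 2 * r :=
        (le_add_of_nonneg_left (mul_nonneg ht (sq_nonneg _))).trans hle
      exact (hgrowth _).trans (by gcongr)
    · refine (norm_le_abs_re_add_abs_im _).trans ?_
      rw [hre, abs_one]
      gcongr
  exact Bornology.isBounded_image_fst_and_snd.1 ⟨(isBounded_Icc 0 (2 * r)).subset hfst, hsnd⟩

theorem isCompact_normalizedCone (hP : IsDilationGauge α P)
    (hα : ∀ j, α j ∈ Ioc 0 1) : IsCompact (normalizedCone P r c) :=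
  isCompact_of_isClosed_isBounded (isClosed_normalizedCone hP.continuous)
    (isBounded_normalizedCone hP hα)

theorem mk_mem_normalizedCone {w : CSp N} (ht : 0 ≤ t) (hre : (lastC w).re = 1)
    (him : |(lastC w).im| ≤ c) (hw : w ∈ scaledDball P r t) : (t, w) ∈ normalizedCone P r c := by
  have hw : t * ‖lastC w‖ ^ 2 + P (initC w) < 2 * r * (lastC w).re := hw
  rw [hre, mul_one] at hw
  exact ⟨ht, hre, him, hw.le⟩

theorem isOpen_projMapInv_mem_scaledDball (hP : Continuous P) :
    IsOpen {x : ℝ × CSp N | lastC x.2 ≠ 0 ∧ projMapInv x.2 ∈ scaledDball P r x.1} := by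
  have hV : IsOpen {x : ℝ × CSp N | lastC x.2 ≠ 0} :=
    isOpen_ne_fun (by fun_prop) continuous_const
  have hD : IsOpen {x : ℝ × CSp N | x.2 ∈ scaledDball P r x.1} :=
    isOpen_lt (by fun_prop) (continuous_const.mul (continuous_re.comp (by fun_prop)))
  have hinv : ContinuousOn (fun x : ℝ × CSp N => (x.1, projMapInv x.2)) {x | lastC x.2 ≠ 0} :=
    continuousOn_fst.prodMk
      (differentiableOn_projMapInv.continuousOn.comp continuousOn_snd fun _ h => h)
  exact hinv.isOpen_inter_preimage hV hD

theorem exists_ball_subset_projMap_image_scaledDball (hP : IsDilationGauge α P)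
    (hα : ∀ j, α j ∈ Ioc 0 1) (hr : r' < r) (c : ℝ) :
    ∃ s > 0, ∀ t w, (t, w) ∈ normalizedCone P r' c →
      ball (projMap w) s ⊆ projMap '' scaledDball P r t := by
  have hden : ∀ x ∈ normalizedCone P r' c, 1 + lastC x.2 ≠ 0 := fun _ hx =>
    one_add_ne_zero_of_re_nonneg (hx.2.1.symm ▸ zero_le_one)
  have hcont : ContinuousOn (fun x : ℝ × CSp N => (x.1, projMap x.2)) (normalizedCone P r' c) :=
    continuousOn_fst.prodMk (differentiableOn_projMap.continuousOn.comp continuousOn_snd hden)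
  have hsub : (fun x : ℝ × CSp N => (x.1, projMap x.2)) '' normalizedCone P r' c ⊆
      {x | lastC x.2 ≠ 0 ∧ projMapInv x.2 ∈ scaledDball P r x.1} := by
    rintro _ ⟨⟨t, w⟩, hx, rfl⟩
    have hw : 1 + lastC w ≠ 0 := hden _ hx
    obtain ⟨-, hre, -, hle⟩ := hx
    refine ⟨lastC_projMap_ne_zero hw, ?_⟩
    rw [projMapInv_projMap hw, scaledDball, mem_ofPred_eq, hre]
    exact hle.trans_lt (by linarith)
  obtain ⟨s, hs, hthick⟩ :=
    ((isCompact_normalizedCone hP hα).image_of_continuousOn hcont).exists_thickening_subset_open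
      (isOpen_projMapInv_mem_scaledDball hP.continuous) hsub
  refine ⟨s, hs, fun t w hw v hv => ?_⟩
  have hv' : (t, v) ∈ thickening s ((fun x => (x.1, projMap x.2)) '' normalizedCone P r' c) :=
    mem_thickening_iff.2 ⟨_, mem_image_of_mem _ hw, by simpa [Prod.dist_eq, hs] using hv⟩
  obtain ⟨hv₀, hvD⟩ := hthick hv'
  exact ⟨_, hvD, projMap_projMapInv hv₀⟩

end NormalizedCone

section Squeezing

theorem bddAbove_radii_of_image_subset_ball {n : ℕ} [NeZero n]
    (Ω : Set (EuclideanSpace ℂ (Fin n))) (q : EuclideanSpace ℂ (Fin n)) :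
    BddAbove {r : ℝ | 0 < r ∧ ∃ f : EuclideanSpace ℂ (Fin n) → EuclideanSpace ℂ (Fin n),
      DifferentiableOn ℂ f Ω ∧ InjOn f Ω ∧ f '' Ω ⊆ ball 0 1 ∧ f q = 0 ∧ ball 0 r ⊆ f '' Ω} := by
  refine ⟨1, ?_⟩
  rintro ρ ⟨-, g, -, -, hg, -, hball⟩
  by_contra! hρ
  have he : EuclideanSpace.single (0 : Fin n) (1 : ℂ) ∈ ball 0 ρ := by simpa using hρ
  simpa using hg (hball he)

theorem div_le_sqf {n : ℕ} [NeZero n] {Ω : Set (EuclideanSpace ℂ (Fin n))}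
    {q : EuclideanSpace ℂ (Fin n)} {F : EuclideanSpace ℂ (Fin n) → EuclideanSpace ℂ (Fin n)}
    {s R : ℝ} (hs : 0 < s) (hR : 0 < R) (hFd : DifferentiableOn ℂ F Ω) (hFi : InjOn F Ω)
    (hFR : MapsTo F Ω (ball (F q) R)) (hFs : ball (F q) s ⊆ F '' Ω) : s / R ≤ sqf Ω q := by
  have hR' : (R : ℂ) ≠ 0 := ofReal_ne_zero.2 hR.ne'
  have hd : DifferentiableOn ℂ (fun x => (R : ℂ)⁻¹ • (F x - F q)) Ω :=
    (hFd.sub_const (F q)).const_smul (R : ℂ)⁻¹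
  refine le_csSup (bddAbove_radii_of_image_subset_ball Ω q)
    ⟨div_pos hs hR, fun x => (R : ℂ)⁻¹ • (F x - F q), hd, ?_, ?_, by simp, ?_⟩
  · intro x hx y hy hxy
    exact hFi hx hy (sub_left_injective (smul_right_injective _ (inv_ne_zero hR') hxy))
  · rintro _ ⟨x, hx, rfl⟩
    have := mem_ball_iff_norm.1 (hFR hx)
    rwa [mem_ball_zero_iff, norm_smul, norm_inv, norm_real, Real.norm_of_nonneg hR.le,
      inv_mul_lt_iff₀ hR, mul_one]
  · intro v hv
    have hmem : F q + (R : ℂ) • v ∈ ball (F q) s := by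
      rw [mem_ball_zero_iff, lt_div_iff₀' hR] at hv
      rwa [mem_ball_iff_norm, add_sub_cancel_left, norm_smul, norm_real, Real.norm_of_nonneg hR.le]
    obtain ⟨x, hx, hxv⟩ := hFs hmem
    exact ⟨x, hx, by simp only [hxv, add_sub_cancel_left, inv_smul_smul₀ hR']⟩

variable {α : Fin N → ℝ} {P : (Fin N → ℂ) → ℝ} {Ω : Set (CSp N)} {f : CSp N → CSp N}
  {q : CSp N} {r r' s t R c : ℝ}

theorem div_le_sqf_of_mapsTo_EP (hP : IsDilationGauge α P) (hfd : DifferentiableOn ℂ f Ω)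
    (hfi : InjOn f Ω) (hfE : MapsTo f Ω (EP P)) (hfr : Dball P r ⊆ f '' Ω) (ht : 0 < t)
    (hs : 0 < s) (hR : 0 < R) (hFR : projMap '' EP P ⊆ ball (projMap (dilateC α t⁻¹ (f q))) R)
    (hFs : ball (projMap (dilateC α t⁻¹ (f q))) s ⊆ projMap '' scaledDball P r t) :
    s / R ≤ sqf Ω q := by
  have ht' : 0 < t⁻¹ := inv_pos.2 ht
  have hE : MapsTo (fun x => dilateC α t⁻¹ (f x)) Ω (EP P) := fun x hx =>
    (dilateC_mem_EP_iff hP ht').2 (hfE hx)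
  have hden : MapsTo (fun x => dilateC α t⁻¹ (f x)) Ω {z | 1 + lastC z ≠ 0} := fun x hx =>
    one_add_lastC_ne_zero_of_mem_EP hP (hE hx)
  have hdilate : Function.Injective (dilateC α t⁻¹) :=
    Function.LeftInverse.injective (dilateC_dilateC ht.le ht'.le (mul_inv_cancel₀ ht.ne'))
  refine div_le_sqf (F := fun x => projMap (dilateC α t⁻¹ (f x))) hs hR
    (differentiableOn_projMap.comp ((differentiable_dilateC α t⁻¹).comp_differentiableOn hfd) hden)
    (injOn_projMap.comp (hdilate.comp_injOn hfi) hden)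
    (fun x hx => hFR (mem_image_of_mem _ (hE hx))) fun v hv => ?_
  obtain ⟨w, hw, rfl⟩ := hFs hv
  obtain ⟨x, hx, hxw⟩ := hfr ((dilateC_mem_Dball_iff hP ht).2 hw)
  refine ⟨x, hx, ?_⟩
  simp only [hxw, dilateC_dilateC ht'.le ht.le (inv_mul_cancel₀ ht.ne')]

theorem mk_dilateC_mem_normalizedCone (hP : IsDilationGauge α P) {z : CSp N}
    (hre : 0 < (lastC z).re) (hz : z ∈ Dball P r)
    (him : |(lastC z).im| ≤ c * |(lastC z).re|) :
    ((lastC z).re, dilateC α (lastC z).re⁻¹ z) ∈ normalizedCone P r c := by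
  have hre' : 0 < (lastC z).re⁻¹ := inv_pos.2 hre
  refine mk_mem_normalizedCone hre.le ?_ ?_ ?_
  · rw [dilateC, lastC_mkPt, re_ofReal_mul, inv_mul_cancel₀ hre.ne']
  · rw [dilateC, lastC_mkPt, im_ofReal_mul, abs_mul, abs_of_pos hre', inv_mul_le_iff₀' hre]
    rwa [abs_of_pos hre] at him
  · rwa [← dilateC_mem_Dball_iff hP hre,
      dilateC_dilateC hre.le hre'.le (mul_inv_cancel₀ hre.ne')]

theorem stmt5_general (hP : IsDilationGauge α P) (hα : ∀ j, α j ∈ Ioc 0 1) (hr : r' < r)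
    (c : ℝ) :
    ∃ γ₀ > 0, ∀ (Ω : Set (CSp N)) (f : CSp N → CSp N), DifferentiableOn ℂ f Ω → InjOn f Ω →
      MapsTo f Ω (EP P) → Dball P r ⊆ f '' Ω →
      ∀ q ∈ Ω ∩ f ⁻¹' (Dball P r' ∩ {z : CSp N | |(lastC z).im| ≤ c * |(lastC z).re|}),
        γ₀ < sqf Ω q := by
  obtain ⟨s, hs, hball⟩ := exists_ball_subset_projMap_image_scaledDball hP hα hr c
  obtain ⟨C, hC₀, hC⟩ :=
    (isBounded_iff_exists_ge 0).1 (isBounded_projMap_image_EP hP hα)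
  have hR : 0 < C + 1 := by positivity
  refine ⟨s / (C + 1) / 2, by positivity, fun Ω f hfd hfi hfE hfr q ⟨hq, hqD, him⟩ => ?_⟩
  have hre : 0 < (lastC (f q)).re := re_lastC_pos_of_mem_EP hP (hfE hq)
  have hqE : dilateC α (lastC (f q)).re⁻¹ (f q) ∈ EP P :=
    (dilateC_mem_EP_iff hP (inv_pos.2 hre)).2 (hfE hq)
  calc s / (C + 1) / 2 < s / (C + 1) := half_lt_self (by positivity)
    _ ≤ sqf Ω q := div_le_sqf_of_mapsTo_EP hP hfd hfi hfE hfr hre hs hR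
      (fun x hx => mem_ball.2 ((hC hx (mem_image_of_mem _ hqE)).trans_lt (lt_add_one C)))
      (hball _ _ (mk_dilateC_mem_normalizedCone hP hre hqD him))

end Squeezing

/-- Let `Ω` be a domain in `ℂⁿ` (`n ≥ 2`), `0 < r ≤ 1`, and `p ∈ ∂Ω` a `(P,r)`-extreme point,
witnessed by a map `f` holomorphic and injective on an open neighborhood `U` of `closure Ω`
with `f (closure Ω) ⊆ closure E_P`, `f(Ω) ⊆ E_P`, `f p = (0',0)` and `D(r) ⊆ f(Ω)`.
Then for every `0 < r' < r` and `c > 0` there are `ε₀ > 0` and `γ₀ > 0` with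
`σ_Ω(q) > γ₀` for all `q ∈ Γ(r',c) ∩ B(p;ε₀)`, where
`Γ(r',c) = f⁻¹(D(r') ∩ {|Im z_n| ≤ c |Re z_n|})`. -/
theorem stmt5 {N : ℕ} (hN : 1 ≤ N) (m : Fin N → ℕ) (hm : ∀ j, 0 < m j)
    (P : (Fin N → ℂ) → ℝ) (hP : IsWHP m P)
    (hPpos : ∀ z' : Fin N → ℂ, z' ≠ 0 → 0 < P z')
    (Ω : Set (CSp N)) (hΩo : IsOpen Ω) (hΩc : IsConnected Ω)
    (p : CSp N) (hp : p ∈ frontier Ω)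
    (r : ℝ) (hr0 : 0 < r) (hr1 : r ≤ 1)
    (f : CSp N → CSp N) (U : Set (CSp N)) (hUo : IsOpen U) (hΩU : closure Ω ⊆ U)
    (hfd : DifferentiableOn ℂ f U) (hfi : InjOn f U)
    (hfcl : f '' closure Ω ⊆ closure (EP P)) (hfΩ : f '' Ω ⊆ EP P)
    (hfp : f p = 0) (hfr : Dball P r ⊆ f '' Ω)
    (r' c : ℝ) (hr'0 : 0 < r') (hr'r : r' < r) (hc : 0 < c) :
    ∃ ε₀ > 0, ∃ γ₀ > 0,
      ∀ q ∈ closure Ω ∩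
          f ⁻¹' (Dball P r' ∩ {z : CSp N | |(lastC z).im| ≤ c * |(lastC z).re|}),
        q ∈ ball p ε₀ → γ₀ < sqf Ω q := by
  have hG := hP.isDilationGauge hPpos
  have hΩU' : Ω ⊆ U := subset_closure.trans hΩU
  obtain ⟨γ₀, hγ₀, h⟩ := stmt5_general hG (one_div_two_mul_mem_Ioc hm) hr'r c
  refine ⟨1, one_pos, γ₀, hγ₀, fun q ⟨hq, hqΓ⟩ _ => h Ω f (hfd.mono hΩU') (hfi.mono hΩU')
    (mapsTo_iff_image_subset.2 hfΩ) hfr q ⟨?_, hqΓ⟩⟩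
  exact hfi.mem_of_mem_image hΩU' (hΩU hq) (hfr (Dball_subset_Dball hG hr'0 hr'r.le hqΓ.1))
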